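/- Let ν be a Borel probability measure on Σ that is exact-dimensional with dimension D > h_X. Then with probability 1, conditional on Q·ν ≠ 0, the measure Q·ν is exact-dimensional with dimension D − h_X. -/

import Mathlib

open MeasureTheory ProbabilityTheory Filter Set
open scoped ENNReal

noncomputable section

/-- The one-sided symbolic space over the alphabet `{0, …, b-1}`. -/
abbrev SymbSpace (b : ℕ) : Type := ℕ → Fin b

/-- The cylinder `[w]` of sequences starting with the finite word `w`. -/
def cylinder {b : ℕ} (w : List (Fin b)) : Set (SymbSpace b) :=
  {x | ∀ i : Fin w.length, x i = w.get i}

/-- The prefix `x|_n` of `x` of length `n`, as a finite word. -/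
def wordPrefix {b : ℕ} (x : SymbSpace b) (n : ℕ) : List (Fin b) :=
  List.ofFn (fun i : Fin n => x i)

/-- `Y_w = X_{w_1} X_{w_1w_2} ⋯ X_{w_1⋯w_n}`. -/
def cascadeY {b : ℕ} {Ω : Type*} (X : List (Fin b) → Ω → ℝ) (w : List (Fin b)) (ω : Ω) : ℝ :=
  ∏ k ∈ Finset.range w.length, X (w.take (k + 1)) ω

/-- The total mass `Z_n = ∑_{|u| = n} Y_u ν([u])`. -/
def cascadeZ {b : ℕ} {Ω : Type*} (X : List (Fin b) → Ω → ℝ) (ν : Measure (SymbSpace b))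
    (n : ℕ) (ω : Ω) : ℝ :=
  ∑ u : Fin n → Fin b, cascadeY X (List.ofFn u) ω * (ν (cylinder (List.ofFn u))).toReal

/-- `Z = limsup_n Z_n`. -/
def cascadeZlim {b : ℕ} {Ω : Type*} (X : List (Fin b) → Ω → ℝ) (ν : Measure (SymbSpace b))
    (ω : Ω) : ℝ :=
  Filter.limsup (fun n => cascadeZ X ν n ω) atTop

/-- Assumption (M1): the weights `X_u`, `u` a nonempty finite word, are i.i.d. with common
law that of the nonnegative random variable `X₀` of expectation 1. -/
structure CascadeM1 {b : ℕ} {Ω : Type*} [MeasurableSpace Ω] (P : Measure Ω)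
    (X : List (Fin b) → Ω → ℝ) (X₀ : Ω → ℝ) : Prop where
  meas : ∀ w, Measurable (X w)
  nonneg : ∀ w ω, 0 ≤ X w ω
  meas₀ : Measurable X₀
  nonneg₀ : ∀ ω, 0 ≤ X₀ ω
  mean₀ : ∫ ω, X₀ ω ∂P = 1
  indep : iIndepFun
    (fun w : {w : List (Fin b) // w ≠ []} => X w.1) P
  ident : ∀ w : List (Fin b), w ≠ [] → IdentDistrib (X w) X₀ P P

/-- `h_X = E(X log X) ∈ [0, ∞]` (well defined since `x log x ≥ -e⁻¹` and, by convexity,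
`E(X log X) ≥ E(X) log E(X) = 0`), encoded as an extended nonnegative real. -/
def entropyX {Ω : Type*} [MeasurableSpace Ω] (P : Measure Ω) (X₀ : Ω → ℝ) : ℝ≥0∞ :=
  (∫⁻ ω, ENNReal.ofReal (X₀ ω * Real.log (X₀ ω)) ∂P) -
    (∫⁻ ω, ENNReal.ofReal (-(X₀ ω * Real.log (X₀ ω))) ∂P)

/-- The lower local dimension `liminf_n (-log ν([x|_n]) / n)` of `ν` at `x`, valued
in `[0, ∞]`. -/
def lowerLocalDim {b : ℕ} (ν : Measure (SymbSpace b)) (x : SymbSpace b) : ℝ≥0∞ :=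
  Filter.liminf
    (fun n : ℕ => ENNReal.ofReal (-Real.log ((ν (cylinder (wordPrefix x n))).toReal) / n))
    atTop

/-- The upper local dimension `limsup_n (-log ν([x|_n]) / n)` of `ν` at `x`. -/
def upperLocalDim {b : ℕ} (ν : Measure (SymbSpace b)) (x : SymbSpace b) : ℝ≥0∞ :=
  Filter.limsup
    (fun n : ℕ => ENNReal.ofReal (-Real.log ((ν (cylinder (wordPrefix x n))).toReal) / n))
    atTop

/-- The lower Hausdorff dimension of `ν`: the `ν`-essential infimum of the lower local
dimension. -/
def lowerHausdorffDim {b : ℕ} (ν : Measure (SymbSpace b)) : ℝ≥0∞ :=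
  essInf (lowerLocalDim ν) ν

/-- The upper Hausdorff dimension of `ν`: the `ν`-essential supremum of the lower local
dimension. -/
def upperHausdorffDim {b : ℕ} (ν : Measure (SymbSpace b)) : ℝ≥0∞ :=
  essSup (lowerLocalDim ν) ν

/-- The upper packing dimension of `ν`: the `ν`-essential supremum of the upper local
dimension. -/
def upperPackingDim {b : ℕ} (ν : Measure (SymbSpace b)) : ℝ≥0∞ :=
  essSup (upperLocalDim ν) ν


section CascadeAux

set_option linter.unusedSectionVars false

variable {b : ℕ} {Ω : Type*} [MeasurableSpace Ω]

lemma mem_cyl_prefix {x y : SymbSpace b} {n : ℕ} :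
    y ∈ cylinder (wordPrefix x n) ↔ ∀ i < n, y i = x i := by
  unfold _root_.cylinder wordPrefix
  constructor
  · intro h i hi
    have := h ⟨i, by simpa using hi⟩
    simpa using this
  · intro h i
    have hi : (i : ℕ) < n := by simpa using i.2
    simpa using h i hi

lemma mem_cyl_ofFn {y : SymbSpace b} {n : ℕ} {u : Fin n → Fin b} :
    y ∈ cylinder (List.ofFn u) ↔ (fun i : Fin n => y i) = u := by
  unfold _root_.cylinder
  constructor
  · intro h
    funext i
    have := h ⟨i, by simp⟩
    simpa using this
  · rintro rfl i
    simp

lemma prefix_congr {x y : SymbSpace b} {n : ℕ} (h : ∀ i < n, y i = x i) :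
    wordPrefix y n = wordPrefix x n := by
  unfold wordPrefix
  congr 1
  funext i
  exact h i i.2

lemma prefix_inj {x y : SymbSpace b} {n m : ℕ} (h : wordPrefix y n = wordPrefix x m) :
    n = m ∧ ∀ i < n, y i = x i := by
  have hl := congrArg List.length h
  simp [wordPrefix] at hl
  subst hl
  refine ⟨rfl, fun i hi => ?_⟩
  unfold wordPrefix at h
  have := congrFun (List.ofFn_injective h) ⟨i, hi⟩
  simpa using this

lemma prefix_ne_nil (x : SymbSpace b) (n : ℕ) : wordPrefix x (n + 1) ≠ [] := by
  intro h
  have := congrArg List.length h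
  simp [wordPrefix] at this

lemma cascadeY_prefix (X : List (Fin b) → Ω → ℝ) (x : SymbSpace b) (k : ℕ) (ω : Ω) :
    cascadeY X (wordPrefix x k) ω = ∏ i ∈ Finset.range k, X (wordPrefix x (i + 1)) ω := by
  unfold cascadeY
  have hl : (wordPrefix x k).length = k := by simp [wordPrefix]
  rw [hl]
  refine Finset.prod_congr rfl fun i hi => ?_
  have hi' : i < k := Finset.mem_range.1 hi
  have : (wordPrefix x k).take (i + 1) = wordPrefix x (i + 1) := by
    unfold wordPrefix
    apply List.ext_getElem
    · simp; omega
    · intro j h1 h2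
      simp [-List.ofFn_succ]
  rw [this]

lemma measurable_cyl (w : List (Fin b)) : MeasurableSet (cylinder w) := by
  unfold _root_.cylinder
  rw [Set.setOf_forall]
  exact MeasurableSet.iInter fun i => measurableSet_eq_fun (measurable_pi_apply _) measurable_const

/-- Density at level `k`. -/
def qd (X : List (Fin b) → Ω → ℝ) (k : ℕ) (ω : Ω) (x : SymbSpace b) : ℝ≥0∞ :=
  ENNReal.ofReal (cascadeY X (wordPrefix x k) ω)

lemma measurable_trunc {γ : Type*} [MeasurableSpace γ] (n : ℕ) (f : Ω → List (Fin b) → γ)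
    (hf : ∀ w, Measurable fun ω => f ω w) :
    Measurable fun p : Ω × SymbSpace b => f p.1 (wordPrefix p.2 n) := by
  have h1 : Measurable fun p : Ω × (Fin n → Fin b) => f p.1 (List.ofFn p.2) :=
    measurable_from_prod_countable_left fun u => hf (List.ofFn u)
  have h2 : Measurable fun p : Ω × SymbSpace b => (p.1, (fun i : Fin n => p.2 i)) := by
    refine measurable_fst.prodMk ?_
    exact measurable_pi_lambda _ fun i => (measurable_pi_apply (i : ℕ)).comp measurable_snd
  exact h1.comp h2

lemma measurable_trunc' {γ : Type*} [MeasurableSpace γ] (n : ℕ) (f : List (Fin b) → γ) :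
    Measurable fun x : SymbSpace b => f (wordPrefix x n) := by
  have h1 : Measurable fun u : (Fin n → Fin b) => f (List.ofFn u) := measurable_of_countable _
  have h2 : Measurable fun x : SymbSpace b => (fun i : Fin n => x i) :=
    measurable_pi_lambda _ fun i => measurable_pi_apply (i : ℕ)
  exact h1.comp h2

lemma measurable_cascadeY {X : List (Fin b) → Ω → ℝ} (hX : ∀ w, Measurable (X w))
    (w : List (Fin b)) : Measurable (cascadeY X w) := by
  unfold cascadeY
  exact Finset.measurable_prod _ fun i _ => hX _

lemma measurable_qd {X : List (Fin b) → Ω → ℝ} (hX : ∀ w, Measurable (X w)) (k : ℕ) :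
    Measurable fun p : Ω × SymbSpace b => qd X k p.1 p.2 :=
  measurable_trunc k (fun ω w => ENNReal.ofReal (cascadeY X w ω))
    fun w => (measurable_cascadeY hX w).ennreal_ofReal

lemma lintegral_cyl_sum (ν : Measure (SymbSpace b)) (n : ℕ) (F : SymbSpace b → ℝ≥0∞) :
    ∫⁻ x, F x ∂ν = ∑ u : Fin n → Fin b, ∫⁻ x in cylinder (List.ofFn u), F x ∂ν := by
  have hU : (⋃ u : Fin n → Fin b, cylinder (List.ofFn u)) = (Set.univ : Set (SymbSpace b)) := by
    ext y
    simp only [Set.mem_iUnion, Set.mem_univ, iff_true]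
    exact ⟨fun i : Fin n => y i, mem_cyl_ofFn.2 rfl⟩
  have h := lintegral_iUnion (μ := ν) (s := fun u : Fin n → Fin b => cylinder (List.ofFn u))
    (fun u => measurable_cyl _) (by
      intro u v huv
      refine Set.disjoint_left.2 fun y hy hy' => huv ?_
      exact (mem_cyl_ofFn.1 hy).symm.trans (mem_cyl_ofFn.1 hy')) F
  rw [hU, Measure.restrict_univ, tsum_fintype] at h
  exact h

/-- mass at level `k` of the cylinder. -/
def vmass (X : List (Fin b) → Ω → ℝ) (ν : Measure (SymbSpace b)) (k : ℕ) (ω : Ω)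
    (w : List (Fin b)) : ℝ≥0∞ :=
  ∫⁻ y in cylinder w, qd X k ω y ∂ν

lemma measurable_vmass {X : List (Fin b) → Ω → ℝ} (hX : ∀ w, Measurable (X w))
    (ν : Measure (SymbSpace b)) [IsProbabilityMeasure ν] (k : ℕ) (w : List (Fin b)) :
    Measurable fun ω => vmass X ν k ω w :=
  Measurable.lintegral_prod_right' (f := fun p : Ω × SymbSpace b => qd X k p.1 p.2)
    (measurable_qd hX k)

lemma qd_congr {X : List (Fin b) → Ω → ℝ} {k n : ℕ} (hkn : k ≤ n) {x y : SymbSpace b}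
    (h : ∀ i < n, y i = x i) (ω : Ω) : qd X k ω y = qd X k ω x := by
  unfold qd
  rw [prefix_congr (fun i hi => h i (hi.trans_le hkn))]

/-- Upper part. -/
lemma upper_part (X : List (Fin b) → Ω → ℝ) (ν : Measure (SymbSpace b)) (k n : ℕ) (ω : Ω)
    (c : ℝ≥0∞) :
    ∫⁻ x, {x | vmass X ν k ω (wordPrefix x n) ≤
        c * (qd X n ω x * ν (cylinder (wordPrefix x n)))}.indicator (qd X k ω) x ∂ν ≤
      c * ∫⁻ x, qd X n ω x ∂ν := by
  set S := {x | vmass X ν k ω (wordPrefix x n) ≤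
        c * (qd X n ω x * ν (cylinder (wordPrefix x n)))} with hS
  rw [lintegral_cyl_sum ν n, lintegral_cyl_sum ν n (fun x => qd X n ω x), Finset.mul_sum]
  refine Finset.sum_le_sum fun u _ => ?_
  by_cases hu : ∃ x, x ∈ cylinder (List.ofFn u) ∩ S
  · obtain ⟨x, hxu, hxS⟩ := hu
    have hw : wordPrefix x n = List.ofFn u := by
      unfold wordPrefix; rw [mem_cyl_ofFn.1 hxu]
    calc ∫⁻ y in cylinder (List.ofFn u), S.indicator (qd X k ω) y ∂ν
        ≤ ∫⁻ y in cylinder (List.ofFn u), qd X k ω y ∂ν :=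
          lintegral_mono fun y => Set.indicator_le_self _ _ y
      _ = vmass X ν k ω (wordPrefix x n) := by rw [hw]; rfl
      _ ≤ c * (qd X n ω x * ν (cylinder (wordPrefix x n))) := hxS
      _ = c * ∫⁻ y in cylinder (List.ofFn u), qd X n ω y ∂ν := by
          congr 1
          rw [← hw, ← setLIntegral_const]
          refine setLIntegral_congr_fun (measurable_cyl _) fun y hy => ?_
          exact (qd_congr le_rfl (mem_cyl_prefix.1 hy) ω).symm
  · push Not at hu
    have : ∫⁻ y in cylinder (List.ofFn u), S.indicator (qd X k ω) y ∂ν = 0 := by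
      rw [← lintegral_zero (μ := ν.restrict (cylinder (List.ofFn u)))]
      refine setLIntegral_congr_fun (measurable_cyl _) fun y hy => ?_
      exact Set.indicator_of_notMem (fun hyS => hu y ⟨hy, hyS⟩) _
    rw [this]; exact zero_le

/-! Expectations -/

variable {P : Measure Ω} {X : List (Fin b) → Ω → ℝ} {X₀ : Ω → ℝ}

lemma integrable_X₀ (hM : CascadeM1 P X X₀) : Integrable X₀ P := by
  by_contra h
  have := hM.mean₀
  rw [integral_undef h] at this
  exact zero_ne_one this

lemma lint_X₀ (hM : CascadeM1 P X X₀) : ∫⁻ ω, ENNReal.ofReal (X₀ ω) ∂P = 1 := by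
  rw [← ofReal_integral_eq_lintegral_ofReal (integrable_X₀ hM)
    (Filter.Eventually.of_forall hM.nonneg₀), hM.mean₀, ENNReal.ofReal_one]

lemma lint_X (hM : CascadeM1 P X X₀) {w : List (Fin b)} (hw : w ≠ []) :
    ∫⁻ ω, ENNReal.ofReal (X w ω) ∂P = 1 := by
  rw [← lint_X₀ hM]
  exact ((hM.ident w hw).comp ENNReal.measurable_ofReal).lintegral_eq

lemma lint_prod_X (hM : CascadeM1 P X X₀) (S : Finset (List (Fin b))) (hS : [] ∉ S) :
    ∫⁻ ω, ∏ w ∈ S, ENNReal.ofReal (X w ω) ∂P = 1 := by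
  classical
  have h := lintegral_prod_eq_prod_lintegral_of_indepFun (μ := P)
    (S.subtype (fun w => w ≠ []))
    (fun (w : {w : List (Fin b) // w ≠ []}) ω => ENNReal.ofReal (X w.1 ω))
    (hM.indep.comp (fun _ => ENNReal.ofReal) fun _ => ENNReal.measurable_ofReal)
    (fun w => (hM.meas w.1).ennreal_ofReal)
  rw [Finset.prod_eq_one (s := S.subtype (fun w => w ≠ [])) (fun w _ => lint_X hM w.2)] at h
  rw [← h]
  refine lintegral_congr fun ω => ?_
  rw [Finset.prod_subtype_of_mem (p := fun w => w ≠ []) (f := fun w => ENNReal.ofReal (X w ω))]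
  intro w hw hn
  exact hS (hn ▸ hw)

lemma qd_eq_prod (hM : CascadeM1 P X X₀) (k : ℕ) (ω : Ω) (x : SymbSpace b) :
    qd X k ω x = ∏ i ∈ Finset.range k, ENNReal.ofReal (X (wordPrefix x (i + 1)) ω) := by
  unfold qd
  rw [cascadeY_prefix, ENNReal.ofReal_prod_of_nonneg fun i _ => hM.nonneg _ _]

lemma lint_qd (hM : CascadeM1 P X X₀) (k : ℕ) (x : SymbSpace b) :
    ∫⁻ ω, qd X k ω x ∂P = 1 := by
  classical
  have := lint_prod_X hM ((Finset.range k).image fun i => wordPrefix x (i + 1)) (by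
    simp only [Finset.mem_image, not_exists, not_and]
    intro i _; exact prefix_ne_nil x i)
  rw [← this]
  refine lintegral_congr fun ω => ?_
  rw [qd_eq_prod hM, Finset.prod_image]
  intro i _ j _ hij
  have := (prefix_inj hij).1
  omega

/-- Correlation for points separating at level `m`. -/
lemma lint_qd_mul (hM : CascadeM1 P X X₀) (m l : ℕ) (x y : SymbSpace b)
    (hne : y m ≠ x m) :
    ∫⁻ ω, qd X (m + l) ω x *
      ∏ i ∈ Finset.range l, ENNReal.ofReal (X (wordPrefix y (m + i + 1)) ω) ∂P = 1 := by
  classical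
  have := lint_prod_X hM (((Finset.range (m + l)).image fun i => wordPrefix x (i + 1)) ∪
      ((Finset.range l).image fun i => wordPrefix y (m + i + 1))) (by
    simp only [Finset.mem_union, Finset.mem_image, not_or, not_exists, not_and]
    exact ⟨fun i _ => prefix_ne_nil x i, fun i _ => prefix_ne_nil y (m + i)⟩)
  rw [← this]
  refine lintegral_congr fun ω => ?_
  rw [Finset.prod_union, qd_eq_prod hM, Finset.prod_image, Finset.prod_image]
  · intro i _ j _ hij
    have := (prefix_inj hij).1
    omega
  · intro i _ j _ hij
    have := (prefix_inj hij).1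
    omega
  · rw [Finset.disjoint_left]
    intro w h1 h2
    obtain ⟨i, _, rfl⟩ := Finset.mem_image.1 h1
    obtain ⟨j, _, h⟩ := Finset.mem_image.1 h2
    have := (prefix_inj h).2 m (by omega)
    exact hne this
lemma measurable_qd_left {X : List (Fin b) → Ω → ℝ} (hX : ∀ w, Measurable (X w)) (k : ℕ)
    (x : SymbSpace b) : Measurable fun ω => qd X k ω x :=
  (measurable_cascadeY hX _).ennreal_ofReal

lemma measurable_qd_right (X : List (Fin b) → Ω → ℝ) (k : ℕ)
    (ω : Ω) : Measurable fun x => qd X k ω x :=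
  measurable_trunc' k (fun w => ENNReal.ofReal (cascadeY X w ω))

lemma corr_bound (hM : CascadeM1 P X X₀) [IsProbabilityMeasure P] (n k : ℕ) (hnk : n ≤ k)
    (x y : SymbSpace b)
    (hxy : ∀ i < n, y i = x i) (a : ℕ → ℝ≥0∞) :
    ∫⁻ ω, {ω | ∀ j ≤ k, qd X j ω x ≤ a j}.indicator (fun ω => qd X k ω x) ω * qd X k ω y ∂P ≤
      ∑ m ∈ Finset.Icc n k, (cylinder (wordPrefix x m)).indicator (fun _ => a m) y := by
  classical
  have key : ∃ m, n ≤ m ∧ m ≤ k ∧ (∀ i < m, y i = x i) ∧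
      ∫⁻ ω, {ω | ∀ j ≤ k, qd X j ω x ≤ a j}.indicator (fun ω => qd X k ω x) ω * qd X k ω y ∂P
        ≤ a m := by
    by_cases h : ∀ i < k, y i = x i
    · refine ⟨k, hnk, le_rfl, h, ?_⟩
      calc _ ≤ ∫⁻ ω, a k * qd X k ω x ∂P := by
            refine lintegral_mono fun ω => ?_
            by_cases hω : ω ∈ {ω | ∀ j ≤ k, qd X j ω x ≤ a j}
            · simp only [Set.indicator_of_mem hω]
              rw [qd_congr le_rfl h]
              exact mul_le_mul_left (hω k le_rfl) _
            · simp [Set.indicator_of_notMem hω]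
        _ = a k := by
            rw [lintegral_const_mul, lint_qd hM, mul_one]
            exact measurable_qd_left hM.meas k x
    · push Not at h
      have hex : ∃ i, i < k ∧ y i ≠ x i := h
      set m := Nat.find hex with hm
      have hm1 : m < k := (Nat.find_spec hex).1
      have hm2 : y m ≠ x m := (Nat.find_spec hex).2
      have hm3 : ∀ i < m, y i = x i := by
        intro i hi
        have := Nat.find_min hex hi
        by_contra hc
        exact this ⟨hi.trans hm1, hc⟩
      have hnm : n ≤ m := by
        by_contra hc
        exact hm2 (hxy m (by omega))
      obtain ⟨l, hl⟩ := Nat.exists_eq_add_of_le hm1.le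
      refine ⟨m, hnm, hm1.le, hm3, ?_⟩
      clear_value m
      subst hl
      calc _ ≤ ∫⁻ ω, a m * (qd X (m + l) ω x *
            ∏ i ∈ Finset.range l, ENNReal.ofReal (X (wordPrefix y (m + i + 1)) ω)) ∂P := by
            refine lintegral_mono fun ω => ?_
            by_cases hω : ω ∈ {ω | ∀ j ≤ m + l, qd X j ω x ≤ a j}
            · simp only [Set.indicator_of_mem hω]
              have e : qd X (m + l) ω y = qd X m ω x *
                  ∏ i ∈ Finset.range l, ENNReal.ofReal (X (wordPrefix y (m + i + 1)) ω) := by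
                rw [← qd_congr le_rfl hm3, qd_eq_prod hM, qd_eq_prod hM, Finset.prod_range_add]
              rw [e, ← mul_assoc, mul_comm (qd X (m + l) ω x) (qd X m ω x), mul_assoc]
              exact mul_le_mul_left (hω m hm1.le) _
            · simp [Set.indicator_of_notMem hω]
        _ = a m := by
            rw [lintegral_const_mul, lint_qd_mul hM m l x y hm2, mul_one]
            refine Measurable.mul ?_ ?_
            · exact measurable_qd_left hM.meas _ x
            · exact Finset.measurable_prod _ fun i _ => (hM.meas _).ennreal_ofReal
  obtain ⟨m, h1, h2, h3, h4⟩ := key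
  refine h4.trans ?_
  refine le_trans ?_ (Finset.single_le_sum
    (f := fun m => (cylinder (wordPrefix x m)).indicator (fun _ => a m) y)
    (fun _ _ => zero_le) (Finset.mem_Icc.2 ⟨h1, h2⟩))
  rw [Set.indicator_of_mem (mem_cyl_prefix.2 h3)]

/-! Entropy -/

lemma entropy_facts (hM : CascadeM1 P X X₀) [IsProbabilityMeasure P]
    (hfin : entropyX P X₀ ≠ ∞) :
    Integrable (fun ω => X₀ ω * Real.log (X₀ ω)) P ∧
      ∫ ω, X₀ ω * Real.log (X₀ ω) ∂P = (entropyX P X₀).toReal := by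
  set f : Ω → ℝ := fun ω => X₀ ω * Real.log (X₀ ω) with hf
  have hfm : Measurable f := hM.meas₀.mul (Real.measurable_log.comp hM.meas₀)
  have hlow : ∀ ω, X₀ ω - 1 ≤ f ω := by
    intro ω
    rcases (hM.nonneg₀ ω).eq_or_lt with h | h
    · simp [hf, ← h]
    · have := Real.one_sub_inv_le_log_of_pos h
      have h2 := mul_le_mul_of_nonneg_left this h.le
      rw [mul_sub, mul_one, mul_inv_cancel₀ h.ne'] at h2
      exact h2
  set A := ∫⁻ ω, ENNReal.ofReal (f ω) ∂P with hA
  set B := ∫⁻ ω, ENNReal.ofReal (-f ω) ∂P with hB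
  have hE : entropyX P X₀ = A - B := rfl
  have hB1 : B ≤ 1 := by
    calc B ≤ ∫⁻ ω, 1 ∂P := by
          refine lintegral_mono fun ω => ?_
          rw [← ENNReal.ofReal_one]
          refine ENNReal.ofReal_le_ofReal ?_
          have := hlow ω
          have := hM.nonneg₀ ω
          linarith
      _ = 1 := by simp
  have hBt : B ≠ ∞ := (hB1.trans_lt ENNReal.one_lt_top).ne
  have hAt : A ≠ ∞ := by
    intro h
    rw [hE, h, ENNReal.top_sub hBt] at hfin
    exact hfin rfl
  have hInt : Integrable f P := by
    refine ⟨hfm.aestronglyMeasurable, ?_⟩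
    rw [hasFiniteIntegral_iff_enorm]
    have : ∀ ω, ‖f ω‖ₑ ≤ ENNReal.ofReal (f ω) + ENNReal.ofReal (-f ω) := by
      intro ω
      rw [← ofReal_norm, Real.norm_eq_abs]
      rcases le_total 0 (f ω) with h | h
      · rw [abs_of_nonneg h]; exact le_self_add
      · rw [abs_of_nonpos h]; exact le_add_self
    refine (lintegral_mono this).trans_lt ?_
    rw [lintegral_add_left hfm.ennreal_ofReal]
    exact ENNReal.add_lt_top.2 ⟨hAt.lt_top, hBt.lt_top⟩
  refine ⟨hInt, ?_⟩
  have hI : ∫ ω, f ω ∂P = A.toReal - B.toReal :=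
    integral_eq_lintegral_pos_part_sub_lintegral_neg_part hInt
  have h0 : 0 ≤ ∫ ω, f ω ∂P := by
    have h1 : ∫ ω, (X₀ ω - 1) ∂P ≤ ∫ ω, f ω ∂P :=
      integral_mono ((integrable_X₀ hM).sub (integrable_const _)) hInt hlow
    rw [integral_sub (integrable_X₀ hM) (integrable_const _), hM.mean₀] at h1
    simpa using h1
  have hBA : B ≤ A := by
    rw [← ENNReal.toReal_le_toReal hBt hAt]
    linarith
  rw [hE, ENNReal.toReal_sub_of_le hBA hAt]
  exact hI

/-- Size-biased law. -/
def biased (P : Measure Ω) (X₀ : Ω → ℝ) : Measure ℝ :=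
  (P.withDensity (fun ω => ENNReal.ofReal (X₀ ω))).map X₀

lemma biased_apply (hM : CascadeM1 P X X₀) {s : Set ℝ} (hs : MeasurableSet s) :
    biased P X₀ s = ∫⁻ ω, s.indicator ENNReal.ofReal (X₀ ω) ∂P := by
  unfold biased
  rw [Measure.map_apply hM.meas₀ hs, withDensity_apply _ (hM.meas₀ hs),
    ← lintegral_indicator (hM.meas₀ hs)]
  rfl

lemma biased_prob (hM : CascadeM1 P X X₀) : IsProbabilityMeasure (biased P X₀) := by
  constructor
  rw [biased_apply hM MeasurableSet.univ]
  simpa using lint_X₀ hM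

lemma biased_log (hM : CascadeM1 P X X₀) [IsProbabilityMeasure P]
    (hfin : entropyX P X₀ ≠ ∞) :
    Integrable Real.log (biased P X₀) ∧
      ∫ t, Real.log t ∂(biased P X₀) = (entropyX P X₀).toReal := by
  obtain ⟨h1, h2⟩ := entropy_facts hM hfin
  have hm : Measurable fun ω => Real.toNNReal (X₀ ω) := hM.meas₀.real_toNNReal
  have e : ∀ ω, Real.toNNReal (X₀ ω) • Real.log (X₀ ω) = X₀ ω * Real.log (X₀ ω) := by
    intro ω
    rw [NNReal.smul_def, Real.coe_toNNReal _ (hM.nonneg₀ ω), smul_eq_mul]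
  have hwd : P.withDensity (fun ω => ENNReal.ofReal (X₀ ω)) =
    P.withDensity (fun ω => ((Real.toNNReal (X₀ ω) : NNReal) : ℝ≥0∞)) := rfl
  unfold biased
  constructor
  · rw [integrable_map_measure Real.measurable_log.aestronglyMeasurable hM.meas₀.aemeasurable, hwd,
      integrable_withDensity_iff_integrable_smul hm]
    simp only [Function.comp, e]
    exact h1
  · rw [integral_map hM.meas₀.aemeasurable Real.measurable_log.aestronglyMeasurable, hwd,
      integral_withDensity_eq_integral_smul hm]
    simp only [e]
    exact h2

lemma biased_pos (hM : CascadeM1 P X X₀) : ∀ᵐ t ∂(biased P X₀), 0 < t := by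
  rw [ae_iff]
  have : {a : ℝ | ¬ 0 < a} = Set.Iic 0 := by ext; simp
  rw [this, biased_apply hM measurableSet_Iic, ← lintegral_zero (μ := P)]
  refine lintegral_congr fun ω => ?_
  by_cases h : X₀ ω ∈ Set.Iic (0 : ℝ)
  · rw [Set.indicator_of_mem h, ENNReal.ofReal_of_nonpos h]
  · rw [Set.indicator_of_notMem h]

lemma sizebias (hM : CascadeM1 P X X₀) [IsProbabilityMeasure P] (I : Finset ℕ)
    (ζ : ℕ → Ω → ℝ) (hζ : ∀ i, Measurable (ζ i)) (hind : iIndepFun ζ P)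
    (hid : ∀ i, IdentDistrib (ζ i) X₀ P P) :
    (P.withDensity (fun ω => ∏ i ∈ I, ENNReal.ofReal (ζ i ω))).map (fun ω (i : I) => ζ i ω) =
      Measure.pi (fun _ : I => biased P X₀) := by
  have := biased_prob hM
  have hmeas : Measurable (fun ω (i : I) => ζ i ω) := measurable_pi_lambda _ fun i => hζ i
  refine Eq.symm (Measure.pi_eq fun s hs => ?_)
  have hms : MeasurableSet (Set.univ.pi s) := MeasurableSet.univ_pi hs
  rw [Measure.map_apply hmeas hms, withDensity_apply _ (hmeas hms),
    ← lintegral_indicator (hmeas hms)]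
  have h := lintegral_prod_eq_prod_lintegral_of_indepFun (μ := P) (Finset.univ : Finset I)
    (fun i ω => (s i).indicator ENNReal.ofReal (ζ i ω))
    ((hind.precomp (g := fun i : I => (i : ℕ)) Subtype.val_injective).comp
      (fun i => (s i).indicator ENNReal.ofReal)
      (fun i => ENNReal.measurable_ofReal.indicator (hs i)))
    (fun i => (ENNReal.measurable_ofReal.indicator (hs i)).comp (hζ i))
  have h2 : ∀ i : I, ∫⁻ ω, (s i).indicator ENNReal.ofReal (ζ i ω) ∂P = biased P X₀ (s i) := by
    intro i
    rw [biased_apply hM (hs i)]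
    exact ((hid i).comp (ENNReal.measurable_ofReal.indicator (hs i))).lintegral_eq
  rw [← Finset.prod_congr rfl (fun i _ => h2 i), ← h]
  refine lintegral_congr fun ω => ?_
  by_cases hω : ω ∈ (fun ω (i : I) => ζ i ω) ⁻¹' (Set.univ.pi s)
  · rw [Set.indicator_of_mem hω, ← Finset.prod_coe_sort]
    refine Finset.prod_congr rfl fun i _ => ?_
    rw [Set.indicator_of_mem (hω i (Set.mem_univ _))]
  · rw [Set.indicator_of_notMem hω]
    simp only [Set.mem_preimage, Set.mem_pi, Set.mem_univ, true_imp_iff, not_forall] at hω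
    obtain ⟨i, hi⟩ := hω
    exact (Finset.prod_eq_zero (Finset.mem_univ i) (Set.indicator_of_notMem hi _)).symm
lemma exists_bound {L : ℕ → ℝ} {c ε : ℝ} (hε : 0 < ε)
    (h : Tendsto (fun n : ℕ => L n / n) atTop (nhds c)) :
    ∃ M : ℕ, ∀ n : ℕ, -(M : ℝ) + n * (c - ε) ≤ L n ∧ L n ≤ M + n * (c + ε) := by
  have h1 : ∀ᶠ n : ℕ in atTop, |L n - n * c| - n * ε ≤ 0 := by
    have h2 := (Metric.tendsto_atTop.1 h) ε hε
    obtain ⟨N, hN⟩ := h2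
    filter_upwards [eventually_ge_atTop N, eventually_gt_atTop 0] with n hn hn0
    have h3 := hN n hn
    rw [Real.dist_eq] at h3
    have hn' : (0 : ℝ) < n := by exact_mod_cast hn0
    have : L n - n * c = n * (L n / n - c) := by field_simp
    rw [this, abs_mul, abs_of_pos hn']
    nlinarith
  have h2 : IsBoundedUnder (· ≤ ·) atTop (fun n : ℕ => |L n - n * c| - n * ε) := ⟨0, by
    simpa using h1⟩
  obtain ⟨B, hB⟩ := h2.bddAbove_range
  obtain ⟨M, hM⟩ := exists_nat_ge B
  refine ⟨M, fun n => ?_⟩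
  have h3 : |L n - n * c| - n * ε ≤ B := hB ⟨n, rfl⟩
  have h4 := abs_le.1 (show |L n - n * c| ≤ M + n * ε by linarith)
  constructor <;> nlinarith [h4.1, h4.2]

lemma tend_bad {α : Type*} [MeasurableSpace α] (μ : Measure α) [IsProbabilityMeasure μ]
    (v : ℕ → α → ℝ) (hv : ∀ n, Measurable (v n)) {c ε : ℝ} (hε : 0 < ε)
    (h : ∀ᵐ a ∂μ, (∀ n, 0 < v n a) ∧
      Tendsto (fun n : ℕ => Real.log (v n a) / n) atTop (nhds c)) :
    Tendsto (fun M : ℕ => μ {a | ¬ ∀ n : ℕ, Real.exp (-(M : ℝ) + n * (c - ε)) ≤ v n a ∧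
      v n a ≤ Real.exp (M + n * (c + ε))}) atTop (nhds 0) := by
  have hz : μ (⋂ M : ℕ, {a | ¬ ∀ n : ℕ, Real.exp (-(M : ℝ) + n * (c - ε)) ≤ v n a ∧
      v n a ≤ Real.exp (M + n * (c + ε))}) = 0 := by
    rw [measure_eq_zero_iff_ae_notMem]
    filter_upwards [h] with a ha hmem
    obtain ⟨hpos, hlim⟩ := ha
    obtain ⟨M, hM⟩ := exists_bound hε hlim
    have := Set.mem_iInter.1 hmem M
    refine this fun n => ?_
    rw [← Real.le_log_iff_exp_le (hpos n), ← Real.log_le_iff_le_exp (hpos n)]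
    exact hM n
  rw [← hz]
  refine tendsto_measure_iInter_atTop ?_ ?_ ⟨0, measure_ne_top _ _⟩
  · intro M
    refine MeasurableSet.nullMeasurableSet ?_
    refine MeasurableSet.compl (s := {a | ∀ n : ℕ, Real.exp (-(M : ℝ) + n * (c - ε)) ≤ v n a ∧
      v n a ≤ Real.exp (M + n * (c + ε))}) ?_
    have : {a | ∀ n : ℕ, Real.exp (-(M : ℝ) + n * (c - ε)) ≤ v n a ∧
      v n a ≤ Real.exp (M + n * (c + ε))} = ⋂ n : ℕ,
        ({a | Real.exp (-(M : ℝ) + n * (c - ε)) ≤ v n a} ∩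
          {a | v n a ≤ Real.exp (M + n * (c + ε))}) := by
      ext a; simp
    rw [this]
    exact MeasurableSet.iInter fun n => (measurableSet_le measurable_const (hv n)).inter
      (measurableSet_le (hv n) measurable_const)
  · intro M M' hMM a ha hall
    refine ha fun n => ?_
    have hc : (M : ℝ) ≤ M' := by exact_mod_cast hMM
    obtain ⟨h1, h2⟩ := hall n
    exact ⟨le_trans (Real.exp_le_exp.2 (by linarith)) h1,
      le_trans h2 (Real.exp_le_exp.2 (by linarith))⟩

/-- Bad probability under the size-biased product measure. -/
def deltaBad (P : Measure Ω) (X₀ : Ω → ℝ) [IsProbabilityMeasure (biased P X₀)] (h ε : ℝ)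
    (M : ℕ) : ℝ≥0∞ :=
  Measure.infinitePi (fun _ : ℕ => biased P X₀) {t | ¬ ∀ n : ℕ,
    Real.exp (-(M : ℝ) + n * (h - ε)) ≤ ∏ i ∈ Finset.range n, t i ∧
      ∏ i ∈ Finset.range n, t i ≤ Real.exp (M + n * (h + ε))}

lemma deltaBad_tendsto (hM : CascadeM1 P X X₀) [IsProbabilityMeasure P]
    [IsProbabilityMeasure (biased P X₀)]
    (hfin : entropyX P X₀ ≠ ∞) {ε : ℝ} (hε : 0 < ε) :
    Tendsto (deltaBad P X₀ (entropyX P X₀).toReal ε) atTop (nhds 0) := by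
  unfold deltaBad
  refine tend_bad (Measure.infinitePi (fun _ : ℕ => biased P X₀))
    (fun n t => ∏ i ∈ Finset.range n, t i)
    (fun n => Finset.measurable_prod _ fun i _ => measurable_pi_apply i) hε ?_
  obtain ⟨hl1, hl2⟩ := biased_log hM hfin
  set μ := Measure.infinitePi (fun _ : ℕ => biased P X₀) with hμ
  have hmp : ∀ i : ℕ, μ.map (fun t : ℕ → ℝ => t i) = biased P X₀ := fun i =>
    Measure.infinitePi_map_eval (fun _ : ℕ => biased P X₀) i
  have hpos : ∀ᵐ t ∂μ, ∀ i, 0 < t i := by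
    rw [ae_all_iff]
    intro i
    have := biased_pos hM
    rw [← hmp i] at this
    exact ae_of_ae_map (measurable_pi_apply i).aemeasurable this
  have hind : iIndepFun (fun (i : ℕ) (t : ℕ → ℝ) => Real.log (t i)) μ :=
    iIndepFun_infinitePi (P := fun _ : ℕ => biased P X₀) (X := fun _ => Real.log)
      (fun _ => Real.measurable_log)
  have hE : μ[fun t : ℕ → ℝ => Real.log (t 0)] = (entropyX P X₀).toReal := by
    rw [← hl2, ← hmp 0, integral_map (measurable_pi_apply 0).aemeasurable
      Real.measurable_log.aestronglyMeasurable]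
  have hsl := strong_law_ae_real (μ := μ) (fun (i : ℕ) (t : ℕ → ℝ) => Real.log (t i))
    (by
      have h0 : Integrable Real.log (μ.map (fun t : ℕ → ℝ => t 0)) := by rw [hmp 0]; exact hl1
      exact h0.comp_measurable (measurable_pi_apply 0))
    (fun i j hij => hind.indepFun hij)
    (fun i => (IdentDistrib.comp (⟨(measurable_pi_apply i).aemeasurable,
      (measurable_pi_apply 0).aemeasurable, by rw [hmp i, hmp 0]⟩ :
        IdentDistrib (fun t : ℕ → ℝ => t i) (fun t : ℕ → ℝ => t 0) μ μ) Real.measurable_log))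
  rw [hE] at hsl
  filter_upwards [hpos, hsl] with t ht hlim
  refine ⟨fun n => Finset.prod_pos fun i _ => ht i, ?_⟩
  refine hlim.congr fun n => ?_
  rw [Real.log_prod (fun i _ => (ht i).ne')]

lemma bad_bound (hM : CascadeM1 P X X₀) [IsProbabilityMeasure P]
    [IsProbabilityMeasure (biased P X₀)] (h ε : ℝ) (M k : ℕ) (x : SymbSpace b) :
    ∫⁻ ω, {ω | ¬ ∀ j ≤ k, Real.exp (-(M : ℝ) + j * (h - ε)) ≤ cascadeY X (wordPrefix x j) ω ∧
      cascadeY X (wordPrefix x j) ω ≤ Real.exp (M + j * (h + ε))}.indicator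
        (fun ω => qd X k ω x) ω ∂P ≤ deltaBad P X₀ h ε M := by
  classical
  set ζ : ℕ → Ω → ℝ := fun i => X (wordPrefix x (i + 1)) with hζ
  have hind : iIndepFun ζ P := hM.indep.precomp
    (g := fun i : ℕ => (⟨wordPrefix x (i + 1), prefix_ne_nil x i⟩ :
      {w : List (Fin b) // w ≠ []})) (by
        intro i j hij
        have := (prefix_inj (congrArg Subtype.val hij)).1
        omega)
  have hsb := sizebias hM (Finset.range k) ζ (fun i => hM.meas _) hind
    (fun i => hM.ident _ (prefix_ne_nil x i))
  have hr := Measure.infinitePi_map_restrict (μ := fun _ : ℕ => biased P X₀)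
    (I := Finset.range k)
  rw [← hr] at hsb
  set ext : (Finset.range k → ℝ) → ℕ → ℝ :=
    fun z i => if hi : i ∈ Finset.range k then z ⟨i, hi⟩ else 1 with hext
  have hextm : ∀ i, Measurable fun z => ext z i := by
    intro i
    simp only [hext]
    split_ifs with hi
    · exact measurable_pi_apply _
    · exact measurable_const
  set T : Set (Finset.range k → ℝ) := {z | ¬ ∀ j ≤ k,
    Real.exp (-(M : ℝ) + j * (h - ε)) ≤ ∏ i ∈ Finset.range j, ext z i ∧
      ∏ i ∈ Finset.range j, ext z i ≤ Real.exp (M + j * (h + ε))} with hT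
  have hpm : ∀ j, Measurable fun z => ∏ i ∈ Finset.range j, ext z i :=
    fun j => Finset.measurable_prod _ fun i _ => hextm i
  have hTm : MeasurableSet T := by
    refine MeasurableSet.compl (s := {z | ∀ j ≤ k,
      Real.exp (-(M : ℝ) + j * (h - ε)) ≤ ∏ i ∈ Finset.range j, ext z i ∧
      ∏ i ∈ Finset.range j, ext z i ≤ Real.exp (M + j * (h + ε))}) ?_
    have : {z | ∀ j ≤ k,
      Real.exp (-(M : ℝ) + j * (h - ε)) ≤ ∏ i ∈ Finset.range j, ext z i ∧
      ∏ i ∈ Finset.range j, ext z i ≤ Real.exp (M + j * (h + ε))} =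
      ⋂ j : ℕ, ⋂ _ : j ≤ k,
        ({z | Real.exp (-(M : ℝ) + j * (h - ε)) ≤ ∏ i ∈ Finset.range j, ext z i} ∩
        {z | ∏ i ∈ Finset.range j, ext z i ≤ Real.exp (M + j * (h + ε))}) := by
      ext z; simp
    rw [this]
    exact MeasurableSet.iInter fun j => MeasurableSet.iInter fun _ =>
      (measurableSet_le measurable_const (hpm j)).inter (measurableSet_le (hpm j) measurable_const)
  have hext_eq : ∀ (t : ℕ → ℝ) (j : ℕ), j ≤ k →
      ∏ i ∈ Finset.range j, ext (fun i : Finset.range k => t i) i =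
        ∏ i ∈ Finset.range j, t i := by
    intro t j hj
    refine Finset.prod_congr rfl fun i hi => ?_
    have : i ∈ Finset.range k := Finset.mem_range.2 ((Finset.mem_range.1 hi).trans_le hj)
    simp only [hext, dif_pos this]
  have hmz : Measurable (fun ω (i : Finset.range k) => ζ i ω) :=
    measurable_pi_lambda _ fun i => hM.meas _
  have hev := congrArg (fun m => m T) hsb
  rw [Measure.map_apply hmz hTm, Measure.map_apply (Finset.measurable_restrict _) hTm,
    withDensity_apply _ (hmz hTm), ← lintegral_indicator (hmz hTm)] at hev
  have hset : {ω | ¬ ∀ j ≤ k, Real.exp (-(M : ℝ) + j * (h - ε)) ≤ cascadeY X (wordPrefix x j) ω ∧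
      cascadeY X (wordPrefix x j) ω ≤ Real.exp (M + j * (h + ε))} =
      (fun ω (i : Finset.range k) => ζ i ω) ⁻¹' T := by
    ext ω
    simp only [hT, Set.mem_setOf_eq, Set.mem_preimage]
    refine not_congr (forall₂_congr fun j hj => ?_)
    rw [hext_eq (fun i => ζ i ω) j hj, cascadeY_prefix]
  rw [hset]
  calc _ = _ := by
        refine lintegral_congr fun ω => ?_
        congr 1
        funext ω
        exact qd_eq_prod hM k ω x
    _ = _ := hev
    _ ≤ _ := by
        unfold deltaBad
        refine measure_mono fun t ht hall => ht fun j hj => ?_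
        have e : (Finset.range k).restrict t = fun i : Finset.range k => t i := rfl
        rw [e, hext_eq t j hj]
        exact hall j
/-- The set of `x` where `ν` violates the dimension bounds with constant `M`. -/
def nuBadSet (ν : Measure (SymbSpace b)) (D ε : ℝ) (M : ℕ) : Set (SymbSpace b) :=
  {x | ¬ ∀ n : ℕ, Real.exp (-(M : ℝ) + n * (-D - ε)) ≤ (ν (cylinder (wordPrefix x n))).toReal ∧
      (ν (cylinder (wordPrefix x n))).toReal ≤ Real.exp (M + n * (-D + ε))}

lemma measurable_nuBadSet (ν : Measure (SymbSpace b)) (D ε : ℝ) (M : ℕ) :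
    MeasurableSet (nuBadSet ν D ε M) := by
  unfold nuBadSet
  refine MeasurableSet.compl (s := {x | ∀ n : ℕ, Real.exp (-(M : ℝ) + n * (-D - ε)) ≤
      (ν (cylinder (wordPrefix x n))).toReal ∧
      (ν (cylinder (wordPrefix x n))).toReal ≤ Real.exp (M + n * (-D + ε))}) ?_
  have hv : ∀ n, Measurable fun x : SymbSpace b => (ν (cylinder (wordPrefix x n))).toReal :=
    fun n => measurable_trunc' n (fun w => (ν (cylinder w)).toReal)
  have : {x | ∀ n : ℕ, Real.exp (-(M : ℝ) + n * (-D - ε)) ≤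
      (ν (cylinder (wordPrefix x n))).toReal ∧
      (ν (cylinder (wordPrefix x n))).toReal ≤ Real.exp (M + n * (-D + ε))} = ⋂ n : ℕ,
      ({x | Real.exp (-(M : ℝ) + n * (-D - ε)) ≤ (ν (cylinder (wordPrefix x n))).toReal} ∩
        {x | (ν (cylinder (wordPrefix x n))).toReal ≤ Real.exp (M + n * (-D + ε))}) := by
    ext x; simp
  rw [this]
  exact MeasurableSet.iInter fun n => (measurableSet_le measurable_const (hv n)).inter
      (measurableSet_le (hv n) measurable_const)

lemma nuBad_tendsto (ν : Measure (SymbSpace b)) [IsProbabilityMeasure ν] {D ε : ℝ} (hε : 0 < ε)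
    (hD : 0 < D) (hexact : ∀ᵐ x ∂ν, Tendsto
      (fun n : ℕ => -Real.log ((ν (cylinder (wordPrefix x n))).toReal) / n) atTop (nhds D)) :
    Tendsto (fun M => ν (nuBadSet ν D ε M)) atTop (nhds 0) := by
  refine tend_bad ν (fun n x => (ν (cylinder (wordPrefix x n))).toReal)
    (fun n => measurable_trunc' n (fun w => (ν (cylinder w)).toReal)) hε ?_
  filter_upwards [hexact] with x hx
  refine ⟨fun n => ?_, ?_⟩
  · by_contra hn
    have h0 : ν (cylinder (wordPrefix x n)) = 0 := by
      have : (ν (cylinder (wordPrefix x n))).toReal = 0 :=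
        le_antisymm (not_lt.1 hn) ENNReal.toReal_nonneg
      exact (ENNReal.toReal_eq_zero_iff _).1 this |>.resolve_right (measure_ne_top _ _)
    have h1 : ∀ᶠ m : ℕ in atTop,
        -Real.log ((ν (cylinder (wordPrefix x m))).toReal) / m = 0 := by
      filter_upwards [eventually_ge_atTop n] with m hm
      have : ν (cylinder (wordPrefix x m)) = 0 := by
        refine measure_mono_null (fun y hy => ?_) h0
        exact mem_cyl_prefix.2 fun i hi => mem_cyl_prefix.1 hy i (hi.trans_le hm)
      simp [this]
    have h2 : Tendsto (fun n : ℕ => -Real.log ((ν (cylinder (wordPrefix x n))).toReal) / n)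
        atTop (nhds 0) := tendsto_const_nhds.congr' (h1.mono fun m hm => hm.symm)
    exact hD.ne' (tendsto_nhds_unique hx h2)
  · refine hx.neg.congr fun n => ?_
    ring

/-- The level `k` bad event. -/
def badK (X : List (Fin b) → Ω → ℝ) (ν : Measure (SymbSpace b)) (s t : ℝ) (n₀ n₁ k : ℕ) :
    Set (Ω × SymbSpace b) :=
  {p | ∃ n : ℕ, n₀ ≤ n ∧ n ≤ n₁ ∧
    (ENNReal.ofReal (Real.exp (-(n * s))) < vmass X ν k p.1 (wordPrefix p.2 n) ∨
      vmass X ν k p.1 (wordPrefix p.2 n) < ENNReal.ofReal (Real.exp (-(n * t))))}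

lemma measurable_vmass_joint {X : List (Fin b) → Ω → ℝ} (hX : ∀ w, Measurable (X w))
    (ν : Measure (SymbSpace b)) [IsProbabilityMeasure ν] (k n : ℕ) :
    Measurable fun p : Ω × SymbSpace b => vmass X ν k p.1 (wordPrefix p.2 n) :=
  measurable_trunc n (fun ω w => vmass X ν k ω w) fun w => measurable_vmass hX ν k w

lemma measurable_badK {X : List (Fin b) → Ω → ℝ} (hX : ∀ w, Measurable (X w))
    (ν : Measure (SymbSpace b)) [IsProbabilityMeasure ν] (s t : ℝ) (n₀ n₁ k : ℕ) :
    MeasurableSet (badK X ν s t n₀ n₁ k) := by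
  have : badK X ν s t n₀ n₁ k = ⋃ n : ℕ, ⋃ _ : n₀ ≤ n, ⋃ _ : n ≤ n₁,
    ({p | ENNReal.ofReal (Real.exp (-(n * s))) < vmass X ν k p.1 (wordPrefix p.2 n)} ∪
      {p | vmass X ν k p.1 (wordPrefix p.2 n) < ENNReal.ofReal (Real.exp (-(n * t)))}) := by
    ext p
    simp only [badK, Set.mem_ofPred_eq, Set.mem_iUnion, Set.mem_union, exists_prop]
  rw [this]
  exact MeasurableSet.iUnion fun n => MeasurableSet.iUnion fun _ => MeasurableSet.iUnion fun _ =>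
    (measurableSet_lt measurable_const (measurable_vmass_joint hX ν k n)).union
      (measurableSet_lt (measurable_vmass_joint hX ν k n) measurable_const)

lemma key_pointwise
    (ν : Measure (SymbSpace b)) [IsProbabilityMeasure ν] (h D ε : ℝ) (M n₀ n₁ k : ℕ)
    (hk : n₁ ≤ k) (p : Ω × SymbSpace b) :
    (badK X ν (D - h - 3 * ε) (D - h + 3 * ε) n₀ n₁ k).indicator
        (fun p => qd X k p.1 p.2) p ≤
      {p : Ω × SymbSpace b | p.2 ∈ nuBadSet ν D ε M}.indicator (fun p => qd X k p.1 p.2) p +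
      ({p : Ω × SymbSpace b | ¬ ∀ j ≤ k, Real.exp (-(M : ℝ) + j * (h - ε)) ≤
          cascadeY X (wordPrefix p.2 j) p.1 ∧
        cascadeY X (wordPrefix p.2 j) p.1 ≤ Real.exp (M + j * (h + ε))}.indicator
        (fun p => qd X k p.1 p.2) p +
      ∑ n ∈ Finset.Icc n₀ n₁,
        ({p : Ω × SymbSpace b | vmass X ν k p.1 (wordPrefix p.2 n) ≤
            ENNReal.ofReal (Real.exp (2 * M - n * ε)) *
              (qd X n p.1 p.2 * ν (cylinder (wordPrefix p.2 n)))}.indicator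
          (fun p => qd X k p.1 p.2) p +
        ENNReal.ofReal (Real.exp (n * (D - h - 3 * ε))) *
          ({p : Ω × SymbSpace b | p.2 ∉ nuBadSet ν D ε M ∧ ∀ j ≤ k, qd X j p.1 p.2 ≤
            ENNReal.ofReal (Real.exp (M + j * (h + ε)))}.indicator
          (fun p => qd X k p.1 p.2) p * vmass X ν k p.1 (wordPrefix p.2 n)))) := by
  by_cases hb : p ∈ badK X ν (D - h - 3 * ε) (D - h + 3 * ε) n₀ n₁ k
  swap
  · rw [Set.indicator_of_notMem hb]; exact zero_le
  rw [Set.indicator_of_mem hb]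
  by_cases h1 : p ∈ {p : Ω × SymbSpace b | p.2 ∈ nuBadSet ν D ε M}
  · rw [Set.indicator_of_mem h1]; exact le_self_add
  rw [Set.indicator_of_notMem h1, zero_add]
  by_cases h2 : p ∈ {p : Ω × SymbSpace b | ¬ ∀ j ≤ k, Real.exp (-(M : ℝ) + j * (h - ε)) ≤
          cascadeY X (wordPrefix p.2 j) p.1 ∧
        cascadeY X (wordPrefix p.2 j) p.1 ≤ Real.exp (M + j * (h + ε))}
  · rw [Set.indicator_of_mem h2]; exact le_self_add
  rw [Set.indicator_of_notMem h2, zero_add]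
  have h2' : ∀ j ≤ k, Real.exp (-(M : ℝ) + j * (h - ε)) ≤
          cascadeY X (wordPrefix p.2 j) p.1 ∧
        cascadeY X (wordPrefix p.2 j) p.1 ≤ Real.exp (M + j * (h + ε)) := not_not.1 h2
  have h1' : ∀ n : ℕ, Real.exp (-(M : ℝ) + n * (-D - ε)) ≤
      (ν (cylinder (wordPrefix p.2 n))).toReal ∧
      (ν (cylinder (wordPrefix p.2 n))).toReal ≤ Real.exp (M + n * (-D + ε)) := not_not.1 h1
  obtain ⟨n, hn0, hn1, hn⟩ := hb
  refine le_trans ?_ (Finset.single_le_sum (fun _ _ => zero_le) (Finset.mem_Icc.2 ⟨hn0, hn1⟩))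
  rcases hn with hn | hn
  · refine le_trans ?_ le_add_self
    have hG : p ∈ {p : Ω × SymbSpace b | p.2 ∉ nuBadSet ν D ε M ∧ ∀ j ≤ k, qd X j p.1 p.2 ≤
            ENNReal.ofReal (Real.exp (M + j * (h + ε)))} :=
      ⟨h1, fun j hj => ENNReal.ofReal_le_ofReal (h2' j hj).2⟩
    rw [Set.indicator_of_mem hG]
    calc qd X k p.1 p.2 = qd X k p.1 p.2 * 1 := (mul_one _).symm
      _ ≤ qd X k p.1 p.2 * (ENNReal.ofReal (Real.exp (n * (D - h - 3 * ε))) *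
            vmass X ν k p.1 (wordPrefix p.2 n)) := by
          refine mul_le_mul_right ?_ _
          refine le_trans ?_ (mul_le_mul_right hn.le _)
          rw [← ENNReal.ofReal_mul (Real.exp_pos _).le, ← Real.exp_add]
          simp
      _ = _ := by ring
  · refine le_trans ?_ le_self_add
    rw [Set.indicator_of_mem]
    show vmass X ν k p.1 (wordPrefix p.2 n) ≤
            ENNReal.ofReal (Real.exp (2 * M - n * ε)) *
              (qd X n p.1 p.2 * ν (cylinder (wordPrefix p.2 n)))
    refine hn.le.trans ?_
    have e1 : ENNReal.ofReal (Real.exp (-(M : ℝ) + n * (h - ε))) ≤ qd X n p.1 p.2 :=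
      ENNReal.ofReal_le_ofReal (h2' n (hn1.trans hk)).1
    have e2 : ENNReal.ofReal (Real.exp (-(M : ℝ) + n * (-D - ε))) ≤
        ν (cylinder (wordPrefix p.2 n)) := by
      rw [← ENNReal.ofReal_toReal (measure_ne_top ν (cylinder (wordPrefix p.2 n)))]
      exact ENNReal.ofReal_le_ofReal (h1' n).1
    refine le_trans (le_of_eq ?_) (mul_le_mul_right (mul_le_mul' e1 e2) _)
    rw [← ENNReal.ofReal_mul (Real.exp_pos _).le, ← Real.exp_add,
      ← ENNReal.ofReal_mul (Real.exp_pos _).le, ← Real.exp_add]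
    congr 2
    ring

lemma T4_bound (hM : CascadeM1 P X X₀) [IsProbabilityMeasure P]
    (ν : Measure (SymbSpace b)) [IsProbabilityMeasure ν] (h D ε : ℝ) (M n k : ℕ)
    (hnk : n ≤ k) :
    ∫⁻ p, {p : Ω × SymbSpace b | p.2 ∉ nuBadSet ν D ε M ∧ ∀ j ≤ k, qd X j p.1 p.2 ≤
            ENNReal.ofReal (Real.exp (M + j * (h + ε)))}.indicator
          (fun p => qd X k p.1 p.2) p * vmass X ν k p.1 (wordPrefix p.2 n) ∂(P.prod ν) ≤
      ∑ m ∈ Finset.Icc n k, ENNReal.ofReal (Real.exp (2 * M - m * (D - h - 2 * ε))) := by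
  set a : ℕ → ℝ≥0∞ := fun j => ENNReal.ofReal (Real.exp (M + j * (h + ε))) with ha
  set G : Set (Ω × SymbSpace b) := {p : Ω × SymbSpace b | p.2 ∉ nuBadSet ν D ε M ∧
    ∀ j ≤ k, qd X j p.1 p.2 ≤ a j} with hG
  have hGm : MeasurableSet G := by
    have : G = (Prod.snd ⁻¹' (nuBadSet ν D ε M)ᶜ) ∩ ⋂ j : ℕ, ⋂ _ : j ≤ k,
        {p | qd X j p.1 p.2 ≤ a j} := by
      ext p; simp [hG]
    rw [this]
    exact (measurable_snd (measurable_nuBadSet ν D ε M).compl).inter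
      (MeasurableSet.iInter fun j => MeasurableSet.iInter fun _ =>
        measurableSet_le (measurable_qd hM.meas j) measurable_const)
  have hgm : Measurable (G.indicator (fun p => qd X k p.1 p.2)) :=
    (measurable_qd hM.meas k).indicator hGm
  have hjm : Measurable fun p : Ω × SymbSpace b => G.indicator (fun p => qd X k p.1 p.2) p *
      vmass X ν k p.1 (wordPrefix p.2 n) := hgm.mul (measurable_vmass_joint hM.meas ν k n)
  rw [lintegral_prod_symm' _ hjm]
  calc _ ≤ ∫⁻ _ : SymbSpace b, ∑ m ∈ Finset.Icc n k,
        ENNReal.ofReal (Real.exp (2 * M - m * (D - h - 2 * ε))) ∂ν := ?_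
    _ = _ := by simp
  refine lintegral_mono fun x => ?_
  by_cases hx : x ∈ nuBadSet ν D ε M
  · have : ∀ ω, G.indicator (fun p => qd X k p.1 p.2) (ω, x) = 0 := fun ω =>
      Set.indicator_of_notMem (fun hm => hm.1 hx) _
    simp [this]
  have hx' : ∀ n : ℕ, Real.exp (-(M : ℝ) + n * (-D - ε)) ≤
      (ν (cylinder (wordPrefix x n))).toReal ∧
      (ν (cylinder (wordPrefix x n))).toReal ≤ Real.exp (M + n * (-D + ε)) := not_not.1 hx
  have e1 : ∀ ω, G.indicator (fun p => qd X k p.1 p.2) (ω, x) =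
      {ω | ∀ j ≤ k, qd X j ω x ≤ a j}.indicator (fun ω => qd X k ω x) ω := by
    intro ω
    by_cases hω : ω ∈ {ω | ∀ j ≤ k, qd X j ω x ≤ a j}
    · rw [Set.indicator_of_mem hω, Set.indicator_of_mem (show (ω, x) ∈ G from ⟨hx, hω⟩)]
    · rw [Set.indicator_of_notMem hω, Set.indicator_of_notMem (fun hm => hω hm.2)]
  simp only [e1]
  have hgx : Measurable fun ω =>
      {ω | ∀ j ≤ k, qd X j ω x ≤ a j}.indicator (fun ω => qd X k ω x) ω := by
    simp only [← e1]
    exact hgm.comp (measurable_id.prodMk measurable_const)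
  have e2 : ∀ ω, {ω | ∀ j ≤ k, qd X j ω x ≤ a j}.indicator (fun ω => qd X k ω x) ω *
      vmass X ν k ω (wordPrefix x n) = ∫⁻ y in cylinder (wordPrefix x n),
        {ω | ∀ j ≤ k, qd X j ω x ≤ a j}.indicator (fun ω => qd X k ω x) ω * qd X k ω y ∂ν := by
    intro ω
    unfold vmass
    rw [lintegral_const_mul _ (measurable_qd_right X k ω)]
  simp only [e2]
  rw [lintegral_lintegral_swap]
  swap
  · exact ((hgx.comp measurable_fst).mul (measurable_qd hM.meas k)).aemeasurable
  calc _ ≤ ∫⁻ y in cylinder (wordPrefix x n), ∑ m ∈ Finset.Icc n k,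
          (cylinder (wordPrefix x m)).indicator (fun _ => a m) y ∂ν := by
        refine setLIntegral_mono' (measurable_cyl _) fun y hy => ?_
        exact corr_bound hM n k hnk x y (mem_cyl_prefix.1 hy) a
    _ ≤ ∫⁻ y, ∑ m ∈ Finset.Icc n k,
          (cylinder (wordPrefix x m)).indicator (fun _ => a m) y ∂ν := setLIntegral_le_lintegral _ _
    _ = ∑ m ∈ Finset.Icc n k, a m * ν (cylinder (wordPrefix x m)) := by
        rw [lintegral_finsetSum _ fun m _ => measurable_const.indicator (measurable_cyl _)]
        refine Finset.sum_congr rfl fun m _ => ?_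
        rw [lintegral_indicator (measurable_cyl _), setLIntegral_const]
    _ ≤ _ := by
        refine Finset.sum_le_sum fun m _ => ?_
        have e3 : ν (cylinder (wordPrefix x m)) ≤
            ENNReal.ofReal (Real.exp (M + m * (-D + ε))) := by
          rw [← ENNReal.ofReal_toReal (measure_ne_top ν (cylinder (wordPrefix x m)))]
          exact ENNReal.ofReal_le_ofReal (hx' m).2
        refine (mul_le_mul_right e3 _).trans (le_of_eq ?_)
        simp only [ha]
        rw [← ENNReal.ofReal_mul (Real.exp_pos _).le, ← Real.exp_add]
        congr 2
        ring

lemma geom_bound {κ : ℝ} (hκ : 0 < κ) : ∃ K : ℝ≥0∞, K ≠ ∞ ∧ ∀ (n k : ℕ) (C : ℝ),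
    ∑ m ∈ Finset.Icc n k, ENNReal.ofReal (Real.exp (C - m * κ)) ≤
      ENNReal.ofReal (Real.exp C) * (K * ENNReal.ofReal (Real.exp (-κ)) ^ n) := by
  set r := ENNReal.ofReal (Real.exp (-κ)) with hr
  have hr1 : r < 1 := by
    rw [hr, ENNReal.ofReal_lt_one, Real.exp_lt_one_iff]; linarith
  refine ⟨(1 - r)⁻¹, ?_, fun n k C => ?_⟩
  · rw [Ne, ENNReal.inv_eq_top]
    exact (tsub_pos_of_lt hr1).ne'
  have e : ∀ m : ℕ, ENNReal.ofReal (Real.exp (C - m * κ)) =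
      ENNReal.ofReal (Real.exp C) * r ^ m := by
    intro m
    rw [hr, ← ENNReal.ofReal_pow (Real.exp_pos _).le, ← Real.exp_nat_mul,
      ← ENNReal.ofReal_mul (Real.exp_pos _).le, ← Real.exp_add]
    congr 2; ring
  simp only [e]
  rw [← Finset.mul_sum]
  refine mul_le_mul_right ?_ _
  calc ∑ m ∈ Finset.Icc n k, r ^ m ≤ ∑ m ∈ Finset.Icc n (n + k), r ^ m :=
        Finset.sum_le_sum_of_subset (Finset.Icc_subset_Icc le_rfl (by omega))
    _ = ∑ i ∈ Finset.range (k + 1), r ^ (n + i) := by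
        rw [← Finset.Ico_succ_right_eq_Icc, Finset.sum_Ico_eq_sum_range]
        congr 2
        simp; omega
    _ = (∑ i ∈ Finset.range (k + 1), r ^ i) * r ^ n := by
        rw [Finset.sum_mul]
        refine Finset.sum_congr rfl fun i _ => ?_
        rw [pow_add, mul_comm]
    _ ≤ _ := by
        refine mul_le_mul_left ?_ _
        rw [← ENNReal.tsum_geometric]
        exact ENNReal.sum_le_tsum _
lemma key_est (hM : CascadeM1 P X X₀) [IsProbabilityMeasure P]
    [IsProbabilityMeasure (biased P X₀)]
    (ν : Measure (SymbSpace b)) [IsProbabilityMeasure ν] (h D ε : ℝ) (hε : 0 < ε)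
    (hκ : 0 < D - h - 2 * ε) :
    ∃ (B : ℕ → ℝ≥0∞) (r : ℝ≥0∞), (∀ M, B M ≠ ∞) ∧ r < 1 ∧ ∀ M n₀ n₁ k : ℕ, n₁ ≤ k →
      ∫⁻ p, (badK X ν (D - h - 3 * ε) (D - h + 3 * ε) n₀ n₁ k).indicator
        (fun p => qd X k p.1 p.2) p ∂(P.prod ν) ≤
      (ν (nuBadSet ν D ε M) + deltaBad P X₀ h ε M) + B M * r ^ n₀ := by
  obtain ⟨K, hK, hKb⟩ := geom_bound hκ
  obtain ⟨K', hK', hKb'⟩ := geom_bound hε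
  refine ⟨fun M => (1 + K) * (ENNReal.ofReal (Real.exp (2 * M)) * K'),
    ENNReal.ofReal (Real.exp (-ε)), ?_, ?_, ?_⟩
  · intro M
    exact ENNReal.mul_ne_top (ENNReal.add_ne_top.2 ⟨ENNReal.one_ne_top, hK⟩)
      (ENNReal.mul_ne_top ENNReal.ofReal_ne_top hK')
  · rw [ENNReal.ofReal_lt_one, Real.exp_lt_one_iff]; linarith
  intro M n₀ n₁ k hk
  have hq := measurable_qd hM.meas (b := b) k
  have hS1 : MeasurableSet {p : Ω × SymbSpace b | p.2 ∈ nuBadSet ν D ε M} :=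
    measurable_snd (measurable_nuBadSet ν D ε M)
  have hY : ∀ j, Measurable fun p : Ω × SymbSpace b => cascadeY X (wordPrefix p.2 j) p.1 :=
    fun j => measurable_trunc j (fun ω w => cascadeY X w ω) fun w => measurable_cascadeY hM.meas w
  have hS2 : MeasurableSet {p : Ω × SymbSpace b | ¬ ∀ j ≤ k, Real.exp (-(M : ℝ) + j * (h - ε)) ≤
          cascadeY X (wordPrefix p.2 j) p.1 ∧
        cascadeY X (wordPrefix p.2 j) p.1 ≤ Real.exp (M + j * (h + ε))} := by
    refine MeasurableSet.compl (s := {p : Ω × SymbSpace b | ∀ j ≤ k,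
      Real.exp (-(M : ℝ) + j * (h - ε)) ≤ cascadeY X (wordPrefix p.2 j) p.1 ∧
        cascadeY X (wordPrefix p.2 j) p.1 ≤ Real.exp (M + j * (h + ε))}) ?_
    have : {p : Ω × SymbSpace b | ∀ j ≤ k,
      Real.exp (-(M : ℝ) + j * (h - ε)) ≤ cascadeY X (wordPrefix p.2 j) p.1 ∧
        cascadeY X (wordPrefix p.2 j) p.1 ≤ Real.exp (M + j * (h + ε))} =
        ⋂ j : ℕ, ⋂ _ : j ≤ k, ({p | Real.exp (-(M : ℝ) + j * (h - ε)) ≤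
          cascadeY X (wordPrefix p.2 j) p.1} ∩
          {p | cascadeY X (wordPrefix p.2 j) p.1 ≤ Real.exp (M + j * (h + ε))}) := by
      ext p; simp
    rw [this]
    exact MeasurableSet.iInter fun j => MeasurableSet.iInter fun _ =>
      (measurableSet_le measurable_const (hY j)).inter (measurableSet_le (hY j) measurable_const)
  have hU : ∀ n : ℕ, MeasurableSet {p : Ω × SymbSpace b | vmass X ν k p.1 (wordPrefix p.2 n) ≤
            ENNReal.ofReal (Real.exp (2 * M - n * ε)) *
              (qd X n p.1 p.2 * ν (cylinder (wordPrefix p.2 n)))} := by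
    intro n
    refine measurableSet_le (measurable_vmass_joint hM.meas ν k n)
      (measurable_const.mul ((measurable_qd hM.meas n).mul ?_))
    exact (measurable_trunc' n (fun w => ν (cylinder w))).comp measurable_snd
  refine (lintegral_mono fun p => key_pointwise ν h D ε M n₀ n₁ k hk p).trans ?_
  rw [lintegral_add_left (hq.indicator hS1), lintegral_add_left (hq.indicator hS2), add_assoc]
  refine add_le_add ?_ (add_le_add ?_ ?_)
  · rw [lintegral_prod_symm' _ (hq.indicator hS1)]
    calc _ = ∫⁻ x, (nuBadSet ν D ε M).indicator 1 x ∂ν := by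
          refine lintegral_congr fun x => ?_
          by_cases hx : x ∈ nuBadSet ν D ε M
          · rw [Set.indicator_of_mem hx, Pi.one_apply, ← lint_qd hM k x]
            refine lintegral_congr fun ω => ?_
            rw [Set.indicator_of_mem (show (ω, x) ∈ {p : Ω × SymbSpace b |
              p.2 ∈ nuBadSet ν D ε M} from hx)]
          · rw [Set.indicator_of_notMem hx, ← lintegral_zero (μ := P)]
            refine lintegral_congr fun ω => ?_
            exact Set.indicator_of_notMem (show (ω, x) ∉ {p : Ω × SymbSpace b |
              p.2 ∈ nuBadSet ν D ε M} from hx) _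
      _ = ν (nuBadSet ν D ε M) := lintegral_indicator_one (measurable_nuBadSet ν D ε M)
      _ ≤ _ := le_rfl
  · rw [lintegral_prod_symm' _ (hq.indicator hS2)]
    calc _ ≤ ∫⁻ _ : SymbSpace b, deltaBad P X₀ h ε M ∂ν := by
          refine lintegral_mono fun x => ?_
          exact bad_bound hM h ε M k x
      _ = _ := by simp
  · have hper : ∀ n ∈ Finset.Icc n₀ n₁, ∫⁻ p, ({p : Ω × SymbSpace b |
          vmass X ν k p.1 (wordPrefix p.2 n) ≤ ENNReal.ofReal (Real.exp (2 * M - n * ε)) *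
              (qd X n p.1 p.2 * ν (cylinder (wordPrefix p.2 n)))}.indicator
          (fun p => qd X k p.1 p.2) p +
        ENNReal.ofReal (Real.exp (n * (D - h - 3 * ε))) *
          ({p : Ω × SymbSpace b | p.2 ∉ nuBadSet ν D ε M ∧ ∀ j ≤ k, qd X j p.1 p.2 ≤
            ENNReal.ofReal (Real.exp (M + j * (h + ε)))}.indicator
          (fun p => qd X k p.1 p.2) p * vmass X ν k p.1 (wordPrefix p.2 n))) ∂(P.prod ν) ≤
          (1 + K) * ENNReal.ofReal (Real.exp (2 * M - n * ε)) := by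
      intro n hn
      rw [lintegral_add_left (hq.indicator (hU n)), add_mul, one_mul]
      refine add_le_add ?_ ?_
      · rw [lintegral_prod _ (hq.indicator (hU n)).aemeasurable]
        calc _ ≤ ∫⁻ ω, ENNReal.ofReal (Real.exp (2 * M - n * ε)) *
              ∫⁻ x, qd X n ω x ∂ν ∂P := by
              refine lintegral_mono fun ω => ?_
              exact upper_part X ν k n ω _
          _ = ENNReal.ofReal (Real.exp (2 * M - n * ε)) := by
              rw [lintegral_const_mul _ (measurable_qd hM.meas n).lintegral_prod_right',
                lintegral_lintegral_swap (measurable_qd hM.meas n).aemeasurable]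
              simp [lint_qd hM]
      · rw [lintegral_const_mul' _ _ ENNReal.ofReal_ne_top]
        have := (T4_bound hM ν h D ε M n k ((Finset.mem_Icc.1 hn).2.trans hk)).trans
          (hKb n k (2 * M))
        refine (mul_le_mul_right this _).trans (le_of_eq ?_)
        have e : ENNReal.ofReal (Real.exp (2 * M - n * ε)) =
            ENNReal.ofReal (Real.exp (n * (D - h - 3 * ε))) * (ENNReal.ofReal (Real.exp (2 * M)) *
              ENNReal.ofReal (Real.exp (-(D - h - 2 * ε))) ^ n) := by
          rw [← ENNReal.ofReal_pow (Real.exp_pos _).le, ← Real.exp_nat_mul,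
            ← ENNReal.ofReal_mul (Real.exp_pos _).le, ← Real.exp_add,
            ← ENNReal.ofReal_mul (Real.exp_pos _).le, ← Real.exp_add]
          congr 2; ring
        rw [e]; ring
    rw [lintegral_finsetSum']
    · refine (Finset.sum_le_sum hper).trans ?_
      rw [← Finset.mul_sum]
      refine (mul_le_mul_right (hKb' n₀ n₁ (2 * M)) _).trans (le_of_eq ?_)
      ring
    · intro n _
      refine ((hq.indicator (hU n)).add (measurable_const.mul
        (Measurable.mul (hq.indicator ?_) (measurable_vmass_joint hM.meas ν k n)))).aemeasurable
      have : {p : Ω × SymbSpace b | p.2 ∉ nuBadSet ν D ε M ∧ ∀ j ≤ k, qd X j p.1 p.2 ≤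
            ENNReal.ofReal (Real.exp (M + j * (h + ε)))} =
          (Prod.snd ⁻¹' (nuBadSet ν D ε M)ᶜ) ∩ ⋂ j : ℕ, ⋂ _ : j ≤ k,
          {p | qd X j p.1 p.2 ≤ ENNReal.ofReal (Real.exp (M + j * (h + ε)))} := by
        ext p; simp
      rw [this]
      exact (measurable_snd (measurable_nuBadSet ν D ε M).compl).inter
        (MeasurableSet.iInter fun j => MeasurableSet.iInter fun _ =>
          measurableSet_le (measurable_qd hM.meas j) measurable_const)

lemma sat_measurable {S : Set (SymbSpace b)} {n : ℕ}
    (hS : ∀ x y, (∀ i < n, y i = x i) → x ∈ S → y ∈ S) : MeasurableSet S := by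
  have h2 : Measurable fun x : SymbSpace b => (fun i : Fin n => x i) :=
    measurable_pi_lambda _ fun i => measurable_pi_apply (i : ℕ)
  have : S = (fun x : SymbSpace b => (fun i : Fin n => x i)) ⁻¹'
      ((fun x : SymbSpace b => (fun i : Fin n => x i)) '' S) := by
    ext y
    constructor
    · intro hy; exact ⟨y, hy, rfl⟩
    · rintro ⟨x, hx, hxy⟩
      refine hS x y (fun i hi => ?_) hx
      exact (congrFun hxy ⟨i, hi⟩).symm
  rw [this]
  exact h2 (Set.toFinite _).measurableSet

open Classical in
lemma sat_lintegral (m : Measure (SymbSpace b)) {S : Set (SymbSpace b)} {n : ℕ}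
    (hS : ∀ x y, (∀ i < n, y i = x i) → x ∈ S → y ∈ S) (F : SymbSpace b → ℝ≥0∞) :
    ∫⁻ x, S.indicator F x ∂m = ∑ u : Fin n → Fin b,
      if (cylinder (List.ofFn u) ∩ S).Nonempty then ∫⁻ x in cylinder (List.ofFn u), F x ∂m
      else 0 := by
  rw [lintegral_cyl_sum m n]
  refine Finset.sum_congr rfl fun u _ => ?_
  split_ifs with hu
  · obtain ⟨x, hxu, hxS⟩ := hu
    refine setLIntegral_congr_fun (measurable_cyl _) fun y hy => ?_
    refine Set.indicator_of_mem (hS x y (fun i hi => ?_) hxS) _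
    have := (mem_cyl_ofFn.1 hy).trans (mem_cyl_ofFn.1 hxu).symm
    exact congrFun this ⟨i, hi⟩
  · rw [← lintegral_zero (μ := m.restrict (cylinder (List.ofFn u)))]
    refine setLIntegral_congr_fun (measurable_cyl _) fun y hy => ?_
    exact Set.indicator_of_notMem (fun hyS => hu ⟨y, hy, hyS⟩) _

/-- Bad set of the limit measure at level `n`. -/
def badL (μ : Measure (SymbSpace b)) (s t : ℝ) (n : ℕ) : Set (SymbSpace b) :=
  {x | ENNReal.ofReal (Real.exp (-(n * s))) < μ (cylinder (wordPrefix x n)) ∨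
      μ (cylinder (wordPrefix x n)) < ENNReal.ofReal (Real.exp (-(n * t)))}

lemma fatou_bad (ν μ : Measure (SymbSpace b)) (X : List (Fin b) → Ω → ℝ) (ω : Ω)
    (hω : ∀ w : List (Fin b), Tendsto (fun k => vmass X ν k ω w) atTop (nhds (μ (cylinder w))))
    (s t : ℝ) (n₀ n₁ : ℕ) :
    μ {x | ∃ n, n₀ ≤ n ∧ n ≤ n₁ ∧ x ∈ badL μ s t n} ≤
      liminf (fun k => ∫⁻ x, (badK X ν s t n₀ n₁ k).indicator (fun p => qd X k p.1 p.2) (ω, x) ∂ν)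
        atTop := by
  classical
  set S := {x | ∃ n, n₀ ≤ n ∧ n ≤ n₁ ∧ x ∈ badL μ s t n} with hSdef
  have hpc : ∀ (x y : SymbSpace b), (∀ i < n₁, y i = x i) → ∀ n ≤ n₁,
      wordPrefix y n = wordPrefix x n := fun x y hxy n hn =>
    prefix_congr fun i hi => hxy i (hi.trans_le hn)
  have hS : ∀ x y, (∀ i < n₁, y i = x i) → x ∈ S → y ∈ S := by
    rintro x y hxy ⟨n, h0, h1, h2⟩
    refine ⟨n, h0, h1, ?_⟩
    unfold badL at h2 ⊢
    simp only [Set.mem_ofPred_eq] at h2 ⊢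
    rwa [hpc x y hxy n h1]
  have hK : ∀ k x y, (∀ i < n₁, y i = x i) → (ω, x) ∈ badK X ν s t n₀ n₁ k →
      (ω, y) ∈ badK X ν s t n₀ n₁ k := by
    rintro k x y hxy ⟨n, h0, h1, h2⟩
    refine ⟨n, h0, h1, ?_⟩
    simp only at h2 ⊢
    rwa [hpc x y hxy n h1]
  have hSm : MeasurableSet S := sat_measurable hS
  have hlim : Tendsto (fun k => ∫⁻ x, S.indicator (qd X k ω) x ∂ν) atTop (nhds (μ S)) := by
    rw [← lintegral_indicator_one hSm, sat_lintegral μ hS]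
    simp only [sat_lintegral ν hS]
    refine tendsto_finsetSum _ fun u _ => ?_
    split_ifs
    · simp only [Pi.one_apply, lintegral_const, one_mul, Measure.restrict_apply_univ]
      exact hω _
    · exact tendsto_const_nhds
  have hev : ∀ᶠ k in atTop, ∀ x ∈ S, (ω, x) ∈ badK X ν s t n₀ n₁ k := by
    have h1 : ∀ u : Fin n₁ → Fin b, ∀ᶠ k in atTop, ∀ x ∈ S, (fun i : Fin n₁ => x i) = u →
        (ω, x) ∈ badK X ν s t n₀ n₁ k := by
      intro u
      by_cases hu : ∃ x ∈ S, (fun i : Fin n₁ => x i) = u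
      · obtain ⟨x, hx, hxu⟩ := hu
        have h2 : ∀ᶠ k in atTop, (ω, x) ∈ badK X ν s t n₀ n₁ k := by
          obtain ⟨n, h0, h1, h2⟩ := hx
          rcases h2 with h2 | h2
          · filter_upwards [(hω (wordPrefix x n)).eventually_const_lt h2] with k hk
            exact ⟨n, h0, h1, Or.inl hk⟩
          · filter_upwards [(hω (wordPrefix x n)).eventually_lt_const h2] with k hk
            exact ⟨n, h0, h1, Or.inr hk⟩
        filter_upwards [h2] with k hk y hy hyu
        refine hK k x y (fun i hi => ?_) hk
        exact congrFun (hyu.trans hxu.symm) ⟨i, hi⟩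
      · push Not at hu
        exact Eventually.of_forall fun k x hx hxu => absurd hxu (hu x hx)
    filter_upwards [eventually_all.2 h1] with k hk x hx
    exact hk _ x hx rfl
  rw [← hlim.liminf_eq]
  refine liminf_le_liminf ?_
  filter_upwards [hev] with k hk
  refine lintegral_mono fun x => ?_
  by_cases hx : x ∈ S
  · rw [Set.indicator_of_mem hx, Set.indicator_of_mem (hk x hx)]
  · rw [Set.indicator_of_notMem hx]; exact zero_le

lemma limsup_null (hM : CascadeM1 P X X₀) [IsProbabilityMeasure P]
    (ν : Measure (SymbSpace b)) [IsProbabilityMeasure ν]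
    (Qν : Ω → Measure (SymbSpace b))
    (hQν : ∀ᵐ ω ∂P, ∀ w : List (Fin b),
      Tendsto (fun k => vmass X ν k ω w) atTop (nhds (Qν ω (cylinder w))))
    {D ε : ℝ}
    (hexact : ∀ᵐ x ∂ν, Tendsto
      (fun n : ℕ => -Real.log ((ν (cylinder (wordPrefix x n))).toReal) / n) atTop (nhds D))
    (hfin : entropyX P X₀ ≠ ∞) (hD : 0 < D) (hε : 0 < ε)
    (hκ : 0 < D - (entropyX P X₀).toReal - 2 * ε) :
    ∀ᵐ ω ∂P, Qν ω {x | ∃ᶠ n in atTop, x ∈ badL (Qν ω) (D - (entropyX P X₀).toReal - 3 * ε)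
      (D - (entropyX P X₀).toReal + 3 * ε) n} = 0 := by
  have := biased_prob hM
  set h := (entropyX P X₀).toReal with hh
  obtain ⟨B, r, hB, hr, hest⟩ := key_est hM ν h D ε hε hκ
  set s := D - h - 3 * ε
  set t := D - h + 3 * ε
  let F : ℕ → ℕ → ℕ → Ω → ℝ≥0∞ := fun n₀ n₁ k ω =>
    ∫⁻ x, (badK X ν s t n₀ n₁ k).indicator (fun p => qd X k p.1 p.2) (ω, x) ∂ν
  have hFm : ∀ n₀ n₁ k, Measurable (F n₀ n₁ k) := fun n₀ n₁ k =>
    ((measurable_qd hM.meas k).indicator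
      (measurable_badK hM.meas ν s t n₀ n₁ k)).lintegral_prod_right'
  let g : ℕ → ℕ → Ω → ℝ≥0∞ := fun n₀ n₁ ω => liminf (fun k => F n₀ n₁ k ω) atTop
  have hgm : ∀ n₀ n₁, Measurable (g n₀ n₁) := fun n₀ n₁ => Measurable.liminf (hFm n₀ n₁)
  have hgb : ∀ n₀ n₁ M, ∫⁻ ω, g n₀ n₁ ω ∂P ≤
      (ν (nuBadSet ν D ε M) + deltaBad P X₀ h ε M) + B M * r ^ n₀ := by
    intro n₀ n₁ M
    refine (lintegral_liminf_le (hFm n₀ n₁)).trans ?_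
    refine (liminf_le_liminf (v := fun _ : ℕ =>
      (ν (nuBadSet ν D ε M) + deltaBad P X₀ h ε M) + B M * r ^ n₀) ?_).trans (by simp)
    filter_upwards [eventually_ge_atTop n₁] with k hk
    refine le_trans (le_of_eq ?_) (hest M n₀ n₁ k hk)
    rw [lintegral_prod _ ((measurable_qd hM.meas k).indicator
      (measurable_badK hM.meas ν s t n₀ n₁ k)).aemeasurable]
  have hgmono : ∀ n₀, Monotone (g n₀) := by
    intro n₀ n₁ n₂ h12 ω
    refine liminf_le_liminf (Eventually.of_forall fun k => ?_)
    refine lintegral_mono fun x => ?_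
    refine Set.indicator_le_indicator_of_subset ?_ (fun _ => zero_le) _
    rintro p ⟨n, h1, h2, h3⟩
    exact ⟨n, h1, h2.trans h12, h3⟩
  let I : Ω → ℝ≥0∞ := fun ω => ⨅ n₀, ⨆ n₁, g n₀ n₁ ω
  have hIm : Measurable I := Measurable.iInf fun n₀ => Measurable.iSup fun n₁ => hgm n₀ n₁
  have hIb : ∀ n₀ M, ∫⁻ ω, I ω ∂P ≤
      (ν (nuBadSet ν D ε M) + deltaBad P X₀ h ε M) + B M * r ^ n₀ := by
    intro n₀ M
    calc ∫⁻ ω, I ω ∂P ≤ ∫⁻ ω, ⨆ n₁, g n₀ n₁ ω ∂P := lintegral_mono fun ω => iInf_le _ n₀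
      _ = ⨆ n₁, ∫⁻ ω, g n₀ n₁ ω ∂P := lintegral_iSup (hgm n₀) (hgmono n₀)
      _ ≤ _ := iSup_le fun n₁ => hgb n₀ n₁ M
  have hIb2 : ∀ M, ∫⁻ ω, I ω ∂P ≤ ν (nuBadSet ν D ε M) + deltaBad P X₀ h ε M := by
    intro M
    have h1 : Tendsto (fun n₀ : ℕ => (ν (nuBadSet ν D ε M) + deltaBad P X₀ h ε M) +
        B M * r ^ n₀) atTop (nhds ((ν (nuBadSet ν D ε M) + deltaBad P X₀ h ε M) + B M * 0)) :=
      tendsto_const_nhds.add (ENNReal.Tendsto.const_mul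
        (ENNReal.tendsto_pow_atTop_nhds_zero_of_lt_one hr) (Or.inr (hB M)))
    rw [mul_zero, add_zero] at h1
    exact ge_of_tendsto' h1 fun n₀ => hIb n₀ M
  have hI0 : ∫⁻ ω, I ω ∂P = 0 := by
    have h1 := (nuBad_tendsto ν hε hD hexact).add (deltaBad_tendsto hM hfin hε)
    rw [add_zero] at h1
    exact le_antisymm (ge_of_tendsto' h1 hIb2) zero_le
  have hIae := (lintegral_eq_zero_iff hIm).1 hI0
  filter_upwards [hIae, hQν] with ω hIω hω
  refine le_antisymm ?_ zero_le
  rw [← show I ω = 0 from hIω]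
  refine le_iInf fun n₀ => ?_
  have hsub : {x | ∃ᶠ n in atTop, x ∈ badL (Qν ω) s t n} ⊆
      ⋃ n₁ : ℕ, {x | ∃ n, n₀ ≤ n ∧ n ≤ n₁ ∧ x ∈ badL (Qν ω) s t n} := by
    intro x hx
    obtain ⟨n, hn, hb⟩ := frequently_atTop.1 hx n₀
    exact Set.mem_iUnion.2 ⟨n, n, hn, le_rfl, hb⟩
  refine (measure_mono hsub).trans ?_
  rw [Monotone.measure_iUnion]
  · exact iSup_mono fun n₁ => fatou_bad ν (Qν ω) X ω hω s t n₀ n₁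
  · rintro n₁ n₂ h12 x ⟨n, h1, h2, h3⟩
    exact ⟨n, h1, h2.trans h12, h3⟩

lemma tendsto_of_badL (μ : Measure (SymbSpace b)) (x : SymbSpace b) (L : ℝ) (hL : 0 < L)
    (hx : ∀ j : ℕ, ¬ ∃ᶠ n in atTop, x ∈ badL μ (L - 3 * (L / (j + 3))) (L + 3 * (L / (j + 3))) n) :
    Tendsto (fun n : ℕ => -Real.log ((μ (cylinder (wordPrefix x n))).toReal) / n) atTop
      (nhds L) := by
  rw [Metric.tendsto_nhds]
  intro δ hδ
  obtain ⟨j, hj⟩ := exists_nat_gt (3 * L / δ)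
  have hj3 : 3 * (L / ((j : ℝ) + 3)) < δ := by
    rw [div_lt_iff₀ hδ] at hj
    rw [← mul_div_assoc, div_lt_iff₀ (by positivity)]
    nlinarith
  filter_upwards [not_frequently.1 (hx j), eventually_ge_atTop 1] with n hn hn1
  set e := L / ((j : ℝ) + 3)
  set C := μ (cylinder (wordPrefix x n))
  have hn' : ¬ (ENNReal.ofReal (Real.exp (-(n * (L - 3 * e)))) < C ∨
    C < ENNReal.ofReal (Real.exp (-(n * (L + 3 * e))))) := hn
  push Not at hn'
  obtain ⟨h1, h2⟩ := hn'
  have hC : C ≠ ∞ := ne_top_of_le_ne_top ENNReal.ofReal_ne_top h1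
  have h1' := ENNReal.toReal_le_of_le_ofReal (Real.exp_pos _).le h1
  have h2' := (ENNReal.ofReal_le_iff_le_toReal hC).1 h2
  have hpos : 0 < C.toReal := (Real.exp_pos _).trans_le h2'
  have h1l := (Real.log_le_iff_le_exp hpos).2 h1'
  have h2l := (Real.le_log_iff_exp_le hpos).2 h2'
  have hn0 : (0 : ℝ) < n := by exact_mod_cast hn1
  rw [Real.dist_eq, abs_lt]
  constructor
  · have : L - 3 * e ≤ -Real.log C.toReal / n := by
      rw [le_div_iff₀ hn0]; linarith
    linarith
  · have : -Real.log C.toReal / n ≤ L + 3 * e := by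
      rw [div_le_iff₀ hn0]; linarith
    linarith

end CascadeAux

/-- **Corollary (exact dimensionality of the limit measure).** Let `Q` be a Mandelbrot
multiplicative cascade (assumption (M1)) acting on a Borel probability measure `ν` on `Σ`,
with limit measure `Q·ν` (characterised by convergence on cylinders). If `ν` is
exact-dimensional with dimension `D > h_X`, then with probability 1, conditional on
`Q·ν ≠ 0`, the measure `Q·ν` is exact-dimensional with dimension `D − h_X`. -/
theorem exact_dimensional_limit_cascade_measure
    {b : ℕ} (hb : 2 ≤ b)
    {Ω : Type*} [MeasurableSpace Ω] (P : Measure Ω) [IsProbabilityMeasure P]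
    (X : List (Fin b) → Ω → ℝ) (X₀ : Ω → ℝ)
    (hM1 : CascadeM1 P X X₀)
    (ν : Measure (SymbSpace b)) [IsProbabilityMeasure ν]
    (Qν : Ω → Measure (SymbSpace b))
    (hQν : ∀ᵐ ω ∂P, ∀ w : List (Fin b),
      Tendsto (fun n => ∫⁻ x in cylinder w, ENNReal.ofReal (cascadeY X (wordPrefix x n) ω) ∂ν)
        atTop (nhds (Qν ω (cylinder w))))
    (D : ℝ)
    (hexact : ∀ᵐ x ∂ν, Tendsto
      (fun n : ℕ => -Real.log ((ν (cylinder (wordPrefix x n))).toReal) / n) atTop (nhds D))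
    (hD : entropyX P X₀ < ENNReal.ofReal D) :
    ∀ᵐ ω ∂P, Qν ω ≠ 0 →
      ∀ᵐ x ∂(Qν ω), Tendsto
        (fun n : ℕ => -Real.log (((Qν ω) (cylinder (wordPrefix x n))).toReal) / n) atTop
        (nhds (D - (entropyX P X₀).toReal)) := by
  have hfin : entropyX P X₀ ≠ ∞ := ne_top_of_lt hD
  have hlt : (entropyX P X₀).toReal < D := by
    have := (ENNReal.lt_ofReal_iff_toReal_lt hfin).1 hD
    exact this
  have hD0 : 0 < D := lt_of_le_of_lt ENNReal.toReal_nonneg hlt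
  have hL : 0 < D - (entropyX P X₀).toReal := by linarith
  have hall : ∀ᵐ ω ∂P, ∀ j : ℕ, Qν ω {x | ∃ᶠ n in atTop, x ∈ badL (Qν ω)
      (D - (entropyX P X₀).toReal - 3 * ((D - (entropyX P X₀).toReal) / (j + 3)))
      (D - (entropyX P X₀).toReal + 3 * ((D - (entropyX P X₀).toReal) / (j + 3))) n} = 0 := by
    rw [ae_all_iff]
    intro j
    refine limsup_null hM1 ν Qν hQν hexact hfin hD0 (by positivity) ?_
    have h3 : 2 * ((D - (entropyX P X₀).toReal) / ((j : ℝ) + 3)) <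
        D - (entropyX P X₀).toReal := by
      rw [← mul_div_assoc, div_lt_iff₀ (by positivity)]
      have : (0 : ℝ) ≤ j := Nat.cast_nonneg j
      nlinarith
    linarith
  filter_upwards [hall] with ω hω _
  have hx : ∀ᵐ x ∂(Qν ω), ∀ j : ℕ, ¬ ∃ᶠ n in atTop, x ∈ badL (Qν ω)
      (D - (entropyX P X₀).toReal - 3 * ((D - (entropyX P X₀).toReal) / (j + 3)))
      (D - (entropyX P X₀).toReal + 3 * ((D - (entropyX P X₀).toReal) / (j + 3))) n := by
    rw [ae_all_iff]
    intro j
    rw [ae_iff]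
    simpa only [not_not] using hω j
  filter_upwards [hx] with x hx
  exact tendsto_of_badL (Qν ω) x _ hL hx

end
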